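/- arXiv:1509.02141 — 3 statements merged into one kernel-verified Lean document; each statement's English description precedes it below -/
import Mathlib

section
/- Let ν be a positive Borel measure on ℝ that is 2π-periodic (ν(A + 2π) = ν(A) for every Borel set A) and finite on compact sets, and let δ ∈ (0,π). Then ν([−π,π)) ≤ 2 ∫_{[−π,π)} (ν([x−δ/2, x+δ/2))/δ) dx, and consequently ν([−π,π)) ≤ 2 ∫_{[−π,π)} (ν((x−δ, x+δ))/δ) dx. -/
open MeasureTheory

/-!
By Tonelli, `∫ x ∈ I, ν (ball x r) dx = ∫ |I ∩ ball y r| dν(y)`, where `I = [a, b)`. A point `y` of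
`I` may lie near an endpoint, but as long as `r ≤ b - a` at least half of its ball remains inside
`I`, so that `|I ∩ ball y r| ≥ r` and the integral is at least `r ν(I)`. The theorem is the case
`r = δ / 2`, since `ball x (δ / 2) ⊆ [x - δ / 2, x + δ / 2) ⊆ (x - δ, x + δ)`.
-/

section DoubleCounting

open scoped ENNReal

variable {α β : Type*} [MeasurableSpace α] [MeasurableSpace β]

theorem mul_measure_le_lintegral_measure_prodMk {μ : Measure α} {ν : Measure β} [SFinite μ]
    [SFinite ν] {E : Set (α × β)} (hE : MeasurableSet E) {t : Set β} {c : ℝ≥0∞}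
    (hc : ∀ y ∈ t, c ≤ μ ((fun x => (x, y)) ⁻¹' E)) :
    c * ν t ≤ ∫⁻ x, ν (Prod.mk x ⁻¹' E) ∂μ :=
  calc c * ν t ≤ c * ν {y | c ≤ μ ((fun x => (x, y)) ⁻¹' E)} := by gcongr; exact hc
    _ ≤ ∫⁻ y, μ ((fun x => (x, y)) ⁻¹' E) ∂ν :=
      mul_meas_ge_le_lintegral (measurable_measure_prodMk_right hE) c
    _ = ∫⁻ x, ν (Prod.mk x ⁻¹' E) ∂μ :=
      (Measure.prod_apply_symm hE).symm.trans (Measure.prod_apply hE)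

end DoubleCounting

section Balls

open Metric
open scoped ENNReal

variable {X : Type*} [PseudoMetricSpace X] [MeasurableSpace X]

section SecondCountable

variable [SecondCountableTopology X] [OpensMeasurableSpace X]

theorem measurableSet_setOf_mem_ball (r : ℝ) : MeasurableSet {p : X × X | p.2 ∈ ball p.1 r} :=
  measurableSet_lt (measurable_snd.dist measurable_fst) measurable_const

theorem measurable_measure_ball (ν : Measure X) [SFinite ν] (r : ℝ) :
    Measurable fun x => ν (ball x r) :=
  measurable_measure_prodMk_left (measurableSet_setOf_mem_ball r)

theorem mul_measure_le_lintegral_measure_ball {μ ν : Measure X} [SFinite μ] [SFinite ν]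
    {t : Set X} {c : ℝ≥0∞} {r : ℝ} (hc : ∀ y ∈ t, c ≤ μ (ball y r)) :
    c * ν t ≤ ∫⁻ x, ν (ball x r) ∂μ :=
  mul_measure_le_lintegral_measure_prodMk (measurableSet_setOf_mem_ball r) fun y hy => by
    simpa only [Set.preimage_ofPred_eq, mem_ball_comm (x := y), Set.ofPred_mem_eq] using hc y hy

end SecondCountable

variable [ProperSpace X] {μ ν : Measure X} [IsFiniteMeasureOnCompacts μ]
  [IsFiniteMeasureOnCompacts ν] {s : Set X}

theorem integrableOn_measureReal_of_subset_closedBall (hs : MeasurableSet s)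
    (hs_bdd : Bornology.IsBounded s) {S : X → Set X} (hS : Measurable fun x => ν (S x)) {R : ℝ}
    (hSR : ∀ x, S x ⊆ closedBall x R) : IntegrableOn (fun x => ν.real (S x)) s μ := by
  refine Measure.integrableOn_of_bounded (M := ν.real (cthickening R s)) hs_bdd.measure_lt_top.ne
    hS.ennreal_toReal.aestronglyMeasurable (ae_restrict_of_forall_mem hs fun x hx => ?_)
  rw [Real.norm_of_nonneg measureReal_nonneg]
  exact measureReal_mono ((hSR x).trans (closedBall_subset_cthickening hx R))
    hs_bdd.cthickening.measure_lt_top.ne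

variable [OpensMeasurableSpace X]

theorem integrableOn_measureReal_ball (hs : MeasurableSet s) (hs_bdd : Bornology.IsBounded s)
    (r : ℝ) : IntegrableOn (fun x => ν.real (ball x r)) s μ :=
  integrableOn_measureReal_of_subset_closedBall hs hs_bdd (measurable_measure_ball ν r)
    fun _ => ball_subset_closedBall

theorem mul_measureReal_le_setIntegral_measureReal_ball (hs : MeasurableSet s)
    (hs_bdd : Bornology.IsBounded s) {c r : ℝ} (hc : ∀ y ∈ s, c ≤ μ.real (ball y r ∩ s)) :
    c * ν.real s ≤ ∫ x in s, ν.real (ball x r) ∂μ := by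
  have hc' : ∀ y ∈ s, ENNReal.ofReal c ≤ μ.restrict s (ball y r) := fun y hy => by
    rw [Measure.restrict_apply measurableSet_ball]
    exact ENNReal.ofReal_le_of_le_toReal (hc y hy)
  have h_nonneg : ∀ x, 0 ≤ ν.real (ball x r) := fun _ => measureReal_nonneg
  rw [← ENNReal.ofReal_le_ofReal_iff (integral_nonneg h_nonneg)]
  calc ENNReal.ofReal (c * ν.real s) = ENNReal.ofReal c * ν s := by
        rw [ENNReal.ofReal_mul' measureReal_nonneg, ofReal_measureReal hs_bdd.measure_lt_top.ne]
    _ ≤ ∫⁻ x in s, ν (ball x r) ∂μ := mul_measure_le_lintegral_measure_ball hc'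
    _ = ∫⁻ x in s, ENNReal.ofReal (ν.real (ball x r)) ∂μ := by
        simp only [ofReal_measureReal measure_ball_lt_top.ne]
    _ = ENNReal.ofReal (∫ x in s, ν.real (ball x r) ∂μ) :=
        (ofReal_integral_eq_lintegral_ofReal (integrableOn_measureReal_ball hs hs_bdd r)
          (ae_of_all _ h_nonneg)).symm

end Balls

section Intervals

open Metric

theorem le_volume_real_ball_inter_Ico {a b r y : ℝ} (hr : 0 ≤ r) (hrab : r ≤ b - a)
    (hy : y ∈ Set.Ico a b) : r ≤ volume.real (ball y r ∩ Set.Ico a b) := by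
  have h_length : r ≤ min (y + r) b - max (y - r) a := by grind
  have h_subset : Set.Ioo (max (y - r) a) (min (y + r) b) ⊆ ball y r ∩ Set.Ico a b := by
    rw [Real.ball_eq_Ioo, ← Set.Ioo_inter_Ioo]
    exact Set.inter_subset_inter_right _ Set.Ioo_subset_Ico_self
  calc r ≤ volume.real (Set.Ioo (max (y - r) a) (min (y + r) b)) := by
        rwa [Real.volume_real_Ioo_of_le (by linarith)]
    _ ≤ volume.real (ball y r ∩ Set.Ico a b) :=
        measureReal_mono h_subset (measure_inter_lt_top_of_left_ne_top measure_ball_lt_top.ne).ne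

theorem measurable_measure_Ico_sub_add (ν : Measure ℝ) [SFinite ν] (r : ℝ) :
    Measurable fun x => ν (Set.Ico (x - r) (x + r)) :=
  measurable_measure_prodMk_left (s := {p : ℝ × ℝ | p.2 ∈ Set.Ico (p.1 - r) (p.1 + r)})
    (by measurability)

variable (ν : Measure ℝ) [IsFiniteMeasureOnCompacts ν]

theorem integrableOn_measureReal_Ico_sub_add (a b r : ℝ) :
    IntegrableOn (fun x => ν.real (Set.Ico (x - r) (x + r))) (Set.Ico a b) :=
  integrableOn_measureReal_of_subset_closedBall measurableSet_Ico (isBounded_Ico a b)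
    (measurable_measure_Ico_sub_add ν r) fun x => by
      rw [Real.closedBall_eq_Icc]
      exact Set.Ico_subset_Icc_self

theorem mul_measureReal_Ico_le_setIntegral_measureReal_Ico {a b r : ℝ} (hr : 0 ≤ r)
    (hrab : r ≤ b - a) :
    r * ν.real (Set.Ico a b) ≤ ∫ x in Set.Ico a b, ν.real (Set.Ico (x - r) (x + r)) :=
  calc r * ν.real (Set.Ico a b) ≤ ∫ x in Set.Ico a b, ν.real (ball x r) :=
        mul_measureReal_le_setIntegral_measureReal_ball measurableSet_Ico (isBounded_Ico a b)
          fun _ => le_volume_real_ball_inter_Ico hr hrab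
    _ ≤ ∫ x in Set.Ico a b, ν.real (Set.Ico (x - r) (x + r)) := by
        refine setIntegral_mono
          (integrableOn_measureReal_ball measurableSet_Ico (isBounded_Ico a b) r)
          (integrableOn_measureReal_Ico_sub_add ν a b r) fun x =>
            measureReal_mono ?_ measure_Ico_lt_top.ne
        rw [Real.ball_eq_Ioo]
        exact Set.Ioo_subset_Ico_self

theorem setIntegral_measureReal_Ico_le_setIntegral_measureReal_Ioo (a b : ℝ) {r R : ℝ}
    (hrR : r < R) :
    ∫ x in Set.Ico a b, ν.real (Set.Ico (x - r) (x + r)) ≤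
      ∫ x in Set.Ico a b, ν.real (Set.Ioo (x - R) (x + R)) := by
  have h_int : IntegrableOn (fun x => ν.real (Set.Ioo (x - R) (x + R))) (Set.Ico a b) := by
    simpa only [Real.ball_eq_Ioo] using
      integrableOn_measureReal_ball (ν := ν) measurableSet_Ico (isBounded_Ico a b) R
  refine setIntegral_mono (integrableOn_measureReal_Ico_sub_add ν a b r) h_int fun x =>
    measureReal_mono ?_ measure_Ioo_lt_top.ne
  exact fun y hy => ⟨by linarith [hy.1], by linarith [hy.2]⟩

end Intervals

theorem stmt7_general (ν : Measure ℝ) [IsFiniteMeasureOnCompacts ν] {a b δ : ℝ} (hδ : 0 < δ)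
    (hδab : δ / 2 ≤ b - a) :
    ν.real (Set.Ico a b) ≤
        2 * ∫ x in Set.Ico a b, ν.real (Set.Ico (x - δ / 2) (x + δ / 2)) / δ ∧
      ν.real (Set.Ico a b) ≤
        2 * ∫ x in Set.Ico a b, ν.real (Set.Ioo (x - δ) (x + δ)) / δ := by
  have h_Ico := mul_measureReal_Ico_le_setIntegral_measureReal_Ico ν (half_pos hδ).le hδab
  have h_Ioo := h_Ico.trans
    (setIntegral_measureReal_Ico_le_setIntegral_measureReal_Ioo ν a b (half_lt_self hδ))
  simp only [integral_div, ← mul_div_assoc, le_div_iff₀ hδ]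
  constructor <;> linarith

/-- If `ν` is a `2π`-periodic positive Borel measure on `ℝ`, finite on
compact sets, and `δ ∈ (0,π)`, then
`ν([-π,π)) ≤ 2 ∫_{[-π,π)} ν([x-δ/2,x+δ/2))/δ dx` and consequently
`ν([-π,π)) ≤ 2 ∫_{[-π,π)} ν((x-δ,x+δ))/δ dx`. -/
theorem stmt7 (ν : Measure ℝ) [IsFiniteMeasureOnCompacts ν]
    (hper : ∀ A : Set ℝ, MeasurableSet A → ν ((fun x => x + 2 * Real.pi) ⁻¹' A) = ν A)
    (δ : ℝ) (hδ0 : 0 < δ) (hδπ : δ < Real.pi) :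
    (ν (Set.Ico (-Real.pi) Real.pi)).toReal ≤
        2 * ∫ x in Set.Ico (-Real.pi) Real.pi,
          (ν (Set.Ico (x - δ / 2) (x + δ / 2))).toReal / δ ∧
      (ν (Set.Ico (-Real.pi) Real.pi)).toReal ≤
        2 * ∫ x in Set.Ico (-Real.pi) Real.pi,
          (ν (Set.Ioo (x - δ) (x + δ))).toReal / δ :=
  stmt7_general ν hδ0 (by linarith)
end

section
/- For all z, ζ in the open unit disc 𝔻 with z ≠ ζ and 1−|ζ| ≤ (1/2)(1−|z|), one has K(z,ζ) ≥ (1/12)·(1−|z|²)/|z−ζ|², where K(z,ζ) = (1/(1−|ζ|))·log|(1−z·conj(ζ))/(z−ζ)|. -/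
open Complex

/-- The kernel `K(z,ζ) = (1/(1-|ζ|)) · log |(1 - z·conj ζ)/(z - ζ)|`. -/
noncomputable def Kker (z ζ : ℂ) : ℝ :=
  (1 / (1 - ‖ζ‖)) * Real.log (‖(1 - z * (starRingEnd ℂ) ζ) / (z - ζ)‖)

/-!
Let `ρ = |z - ζ| / |1 - z ζ̄|` be the pseudo-hyperbolic distance. From `log (1 / ρ) ≥ (1 - ρ²) / 2`
and `1 - ρ² = (1 - |z|²) (1 - |ζ|²) / |1 - z ζ̄|²`, cancelling `1 - |ζ|` gives
`K(z,ζ) ≥ (1 + |ζ|) (1 - |z|²) / (2 |1 - z ζ̄|²)`. If `1 - |ζ| ≤ c (1 - |z|)`, then `|ζ| ≥ 1 - c`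
and `ρ ≥ (1 - c) / (1 + c)`, so `K(z,ζ) ≥ C (1 - |z|²) / |z - ζ|²` with
`C = (1 - c / 2) ((1 - c) / (1 + c))²`, which is `1 / 12` at `c = 1 / 2`.
-/

open scoped ComplexConjugate

section RCLike

variable {𝕜 : Type*} [RCLike 𝕜]

theorem norm_one_sub_mul_conj_sq (z w : 𝕜) :
    ‖1 - z * conj w‖ ^ 2 = ‖z - w‖ ^ 2 + (1 - ‖z‖ ^ 2) * (1 - ‖w‖ ^ 2) := by
  rw [norm_sub_sq (𝕜 := 𝕜), norm_sub_rev z w, norm_sub_sq (𝕜 := 𝕜)]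
  simp only [RCLike.inner_apply, map_one, mul_one, norm_one, norm_mul, RCLike.norm_conj]
  ring

theorem norm_one_sub_mul_conj_pos {z w : 𝕜} (hz : ‖z‖ < 1) (hw : ‖w‖ ≤ 1) :
    0 < ‖1 - z * conj w‖ := by
  have hlt : ‖z * conj w‖ < 1 := by
    rw [norm_mul, RCLike.norm_conj]
    exact mul_lt_one_of_nonneg_of_lt_one_left (norm_nonneg z) hz hw
  refine norm_pos_iff.mpr (sub_ne_zero.mpr fun h ↦ ?_)
  simp [← h] at hlt

theorem norm_one_sub_mul_conj_le (z w : 𝕜) :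
    ‖1 - z * conj w‖ ≤ |1 - ‖w‖ ^ 2| + ‖z - w‖ * ‖w‖ := by
  have hsplit : 1 - z * conj w = ((1 - ‖w‖ ^ 2 : ℝ) : 𝕜) - (z - w) * conj w := by
    push_cast
    rw [← RCLike.mul_conj]
    ring
  calc ‖1 - z * conj w‖ ≤ ‖((1 - ‖w‖ ^ 2 : ℝ) : 𝕜)‖ + ‖(z - w) * conj w‖ :=
        hsplit ▸ norm_sub_le _ _
    _ = |1 - ‖w‖ ^ 2| + ‖z - w‖ * ‖w‖ := by
        rw [RCLike.norm_ofReal, norm_mul, RCLike.norm_conj]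

theorem one_sub_mul_norm_one_sub_mul_conj_le {z w : 𝕜} {c : ℝ} (hw : ‖w‖ ≤ 1) (hc₀ : 0 ≤ c)
    (hc₁ : c ≤ 1) (h : 1 - ‖w‖ ≤ c * (1 - ‖z‖)) :
    (1 - c) * ‖1 - z * conj w‖ ≤ (1 + c) * ‖z - w‖ := by
  have hdist : (1 - c) * (1 - ‖w‖) ≤ c * ‖z - w‖ :=
    calc (1 - c) * (1 - ‖w‖) ≤ c * (‖w‖ - ‖z‖) := by linarith
      _ ≤ c * ‖z - w‖ := by
        rw [norm_sub_rev]
        gcongr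
        exact norm_sub_norm_le w z
  have hsq : 0 ≤ 1 - ‖w‖ ^ 2 := sub_nonneg.mpr (pow_le_one₀ (norm_nonneg w) hw)
  calc (1 - c) * ‖1 - z * conj w‖
      ≤ (1 - c) * (1 - ‖w‖ ^ 2 + ‖z - w‖ * ‖w‖) := by
        rw [← abs_of_nonneg hsq]
        exact mul_le_mul_of_nonneg_left (norm_one_sub_mul_conj_le z w) (sub_nonneg.mpr hc₁)
    _ = (1 - c) * (1 - ‖w‖) * (1 + ‖w‖) + (1 - c) * (‖z - w‖ * ‖w‖) := by ring
    _ ≤ c * ‖z - w‖ * (1 + ‖w‖) + (1 - c) * (‖z - w‖ * ‖w‖) := by gcongr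
    _ = (c + ‖w‖) * ‖z - w‖ := by ring
    _ ≤ (1 + c) * ‖z - w‖ := by
        gcongr ?_ * _
        linarith

end RCLike

theorem one_sub_inv_sq_div_two_le_log {x : ℝ} (hx : x ≠ 0) :
    (1 - (x ^ 2)⁻¹) / 2 ≤ Real.log x := by
  have h := Real.one_sub_inv_le_log_of_pos (sq_pos_of_ne_zero hx)
  rw [Real.log_pow] at h
  push_cast at h
  linarith

theorem le_Kker {z ζ : ℂ} (hz : ‖z‖ < 1) (hζ : ‖ζ‖ < 1) (hne : z ≠ ζ) :
    (1 + ‖ζ‖) / 2 * (1 - ‖z‖ ^ 2) / ‖1 - z * conj ζ‖ ^ 2 ≤ Kker z ζ := by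
  have hdist : 0 < ‖z - ζ‖ := norm_sub_pos_iff.mpr hne
  have hconj : 0 < ‖1 - z * conj ζ‖ := norm_one_sub_mul_conj_pos hz hζ.le
  have hζ' : 0 < 1 - ‖ζ‖ := sub_pos.mpr hζ
  have hρ : 1 - ((‖1 - z * conj ζ‖ / ‖z - ζ‖) ^ 2)⁻¹
      = (1 - ‖z‖ ^ 2) * (1 - ‖ζ‖ ^ 2) / ‖1 - z * conj ζ‖ ^ 2 := by
    rw [div_pow, inv_div, one_sub_div (pow_pos hconj 2).ne']
    congr 1
    linarith [norm_one_sub_mul_conj_sq z ζ]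
  calc (1 + ‖ζ‖) / 2 * (1 - ‖z‖ ^ 2) / ‖1 - z * conj ζ‖ ^ 2
      = 1 / (1 - ‖ζ‖) * ((1 - ((‖1 - z * conj ζ‖ / ‖z - ζ‖) ^ 2)⁻¹) / 2) := by
        rw [hρ]
        field_simp
        ring
    _ ≤ 1 / (1 - ‖ζ‖) * Real.log (‖1 - z * conj ζ‖ / ‖z - ζ‖) := by
        gcongr
        exact one_sub_inv_sq_div_two_le_log (div_pos hconj hdist).ne'
    _ = Kker z ζ := by rw [Kker, norm_div]

theorem stmt10_general {z ζ : ℂ} {c : ℝ} (hz : ‖z‖ < 1) (hζ : ‖ζ‖ < 1) (hc : c < 1)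
    (hclose : 1 - ‖ζ‖ ≤ c * (1 - ‖z‖)) :
    (1 - c / 2) * ((1 - c) / (1 + c)) ^ 2 * (1 - ‖z‖ ^ 2) / ‖z - ζ‖ ^ 2 ≤ Kker z ζ := by
  have hc₀ : 0 < c := pos_of_mul_pos_left ((sub_pos.mpr hζ).trans_le hclose) (sub_pos.mpr hz).le
  have hne : z ≠ ζ := by
    rintro rfl
    exact hclose.not_gt (mul_lt_of_lt_one_left (sub_pos.mpr hz) hc)
  have hdist : 0 < ‖z - ζ‖ := norm_sub_pos_iff.mpr hne
  have hconj : 0 < ‖1 - z * conj ζ‖ := norm_one_sub_mul_conj_pos hz hζ.le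
  have : 0 ≤ 1 - c := sub_nonneg.mpr hc.le
  have hz₂ : 0 ≤ 1 - ‖z‖ ^ 2 := sub_nonneg.mpr (pow_le_one₀ (norm_nonneg z) hz.le)
  have hζ_ge : 1 - c / 2 ≤ (1 + ‖ζ‖) / 2 := by
    linarith [mul_nonneg hc₀.le (norm_nonneg z)]
  have hρ : (1 - c) / (1 + c) / ‖z - ζ‖ ≤ 1 / ‖1 - z * conj ζ‖ := by
    rw [div_div, div_le_div_iff₀ (by positivity) hconj, one_mul]
    exact one_sub_mul_norm_one_sub_mul_conj_le hζ.le hc₀.le hc.le hclose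
  calc (1 - c / 2) * ((1 - c) / (1 + c)) ^ 2 * (1 - ‖z‖ ^ 2) / ‖z - ζ‖ ^ 2
      = (1 - c / 2) * (1 - ‖z‖ ^ 2) * ((1 - c) / (1 + c) / ‖z - ζ‖) ^ 2 := by ring
    _ ≤ (1 + ‖ζ‖) / 2 * (1 - ‖z‖ ^ 2) * (1 / ‖1 - z * conj ζ‖) ^ 2 := by gcongr
    _ = (1 + ‖ζ‖) / 2 * (1 - ‖z‖ ^ 2) / ‖1 - z * conj ζ‖ ^ 2 := by ring
    _ ≤ Kker z ζ := le_Kker hz hζ hne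

/-- For `z, ζ` in the open unit disc with `z ≠ ζ` and
`1-|ζ| ≤ (1/2)(1-|z|)`, one has `K(z,ζ) ≥ (1/12)·(1-|z|²)/|z-ζ|²`. -/
theorem stmt10 (z ζ : ℂ) (hz : ‖z‖ < 1) (hζ : ‖ζ‖ < 1) (hne : z ≠ ζ)
    (hclose : 1 - ‖ζ‖ ≤ (1 / 2) * (1 - ‖z‖)) :
    (1 / 12) * (1 - ‖z‖ ^ 2) / ‖z - ζ‖ ^ 2 ≤ Kker z ζ := by
  convert stmt10_general hz hζ one_half_lt_one hclose using 3
  norm_num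
end

section
/- Let s be a nonnegative integer. For all z ∈ 𝔻 and ζ ∈ closure(𝔻) with |A(z,ζ)| < 1/2, one has |log|E(A(z,ζ),s)|| ≤ 2·|A(z,ζ)|^{s+1}/(s+1), and consequently |K_s(z,ζ)| ≤ (2^{s+2}/(s+1))·(1/|1−z·conj(ζ)|^{s+1}). -/
open Complex

/-- The Weierstrass primary factor `E(w,s) = (1-w)·exp(w + w²/2 + ⋯ + w^s/s)`. -/
noncomputable def weierE (w : ℂ) (s : ℕ) : ℂ :=
  (1 - w) * Complex.exp (∑ j ∈ Finset.range s, w ^ (j + 1) / (j + 1))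

/-- `A(z,ζ) = (1-|ζ|²)/(1 - z·conj ζ)`. -/
noncomputable def Acayley (z ζ : ℂ) : ℂ :=
  ((1 : ℂ) - (‖ζ‖ : ℂ) ^ 2) / (1 - z * (starRingEnd ℂ) ζ)

/-- The kernel `K_s(z,ζ) = -log|E(A(z,ζ),s)| / (1-|ζ|)^{s+1}`. -/
noncomputable def Ks (s : ℕ) (z ζ : ℂ) : ℝ :=
  -Real.log ‖weierE (Acayley z ζ) s‖ / (1 - ‖ζ‖) ^ (s + 1)

/-- The pseudohyperbolic disc `D*(z,σ) = {ζ : |(z-ζ)/(1-z·conj ζ)| < σ}`. -/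
noncomputable def pseudoDisc (z : ℂ) (σ : ℝ) : Set ℂ :=
  {ζ : ℂ | ‖(z - ζ) / (1 - z * (starRingEnd ℂ) ζ)‖ < σ}

/-!
For `w ≠ 1`, `log |E(w,s)|` is the real part of the remainder of the Taylor expansion of
`log (1 - w)` after the term of degree `s`, and that remainder is at most
`|w|^(s+1) / ((1 - |w|) (s + 1))` when `|w| < 1`. For `K_s`, factor
`1 - |ζ|² = (1 - |ζ|) (1 + |ζ|)`: the first factor cancels against the denominator of `K_s`,
and the second is at most `2`.
-/

section PrimaryFactor

variable {w : ℂ}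

theorem logTaylor_succ_neg (s : ℕ) (w : ℂ) :
    logTaylor (s + 1) (-w) = -∑ j ∈ Finset.range s, w ^ (j + 1) / (j + 1) := by
  have sign_cancel (n : ℕ) : (-1 : ℂ) ^ (n + 1) * (-w) ^ n = -w ^ n := by
    rw [pow_succ, mul_neg_one, neg_mul, ← mul_pow, neg_one_mul, neg_neg]
  simp only [logTaylor, sign_cancel, Finset.sum_range_succ', Nat.cast_zero, div_zero, add_zero,
    Nat.cast_add, Nat.cast_one, neg_div, Finset.sum_neg_distrib]

theorem weierE_eq_exp (s : ℕ) (hw : w ≠ 1) :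
    weierE w s = exp (log (1 - w) - logTaylor (s + 1) (-w)) := by
  rw [logTaylor_succ_neg, sub_neg_eq_add, exp_add, exp_log (sub_ne_zero.2 hw.symm), weierE]

theorem log_norm_weierE (s : ℕ) (hw : w ≠ 1) :
    Real.log ‖weierE w s‖ = (log (1 - w) - logTaylor (s + 1) (-w)).re := by
  rw [weierE_eq_exp s hw, norm_exp, Real.log_exp]

theorem abs_log_norm_weierE_le (s : ℕ) (hw : ‖w‖ < 1) :
    |Real.log ‖weierE w s‖| ≤ ‖w‖ ^ (s + 1) * (1 - ‖w‖)⁻¹ / (s + 1) := by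
  have hw_ne : w ≠ 1 := by
    rintro rfl
    simp at hw
  have remainder_le := norm_log_sub_logTaylor_le s ((norm_neg w).trans_lt hw)
  rw [norm_neg, ← sub_eq_add_neg] at remainder_le
  rw [log_norm_weierE s hw_ne]
  exact (abs_re_le_norm _).trans remainder_le

theorem abs_log_norm_weierE_le_of_norm_le_half (s : ℕ) (hw : ‖w‖ ≤ 1 / 2) :
    |Real.log ‖weierE w s‖| ≤ 2 * ‖w‖ ^ (s + 1) / (s + 1) := by
  have inv_le_two : (1 - ‖w‖)⁻¹ ≤ 2 := inv_le_of_inv_le₀ two_pos (by linarith)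
  calc |Real.log ‖weierE w s‖|
      ≤ ‖w‖ ^ (s + 1) * (1 - ‖w‖)⁻¹ / (s + 1) := abs_log_norm_weierE_le s (by linarith)
    _ ≤ ‖w‖ ^ (s + 1) * 2 / (s + 1) := by gcongr
    _ = 2 * ‖w‖ ^ (s + 1) / (s + 1) := by rw [mul_comm 2]

end PrimaryFactor

section Kernel

variable {z ζ : ℂ}

theorem one_sub_mul_conj_ne_zero (hz : ‖z‖ < 1) (hζ : ‖ζ‖ ≤ 1) :
    1 - z * (starRingEnd ℂ) ζ ≠ 0 := by
  have norm_lt_one : ‖z * (starRingEnd ℂ) ζ‖ < 1 := by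
    rw [norm_mul, norm_conj]
    exact mul_lt_one_of_nonneg_of_lt_one_left (norm_nonneg z) hz hζ
  intro h
  rw [← sub_eq_zero.1 h, norm_one] at norm_lt_one
  exact norm_lt_one.false

theorem norm_Acayley_mul_norm (hzζ : 1 - z * (starRingEnd ℂ) ζ ≠ 0) :
    ‖Acayley z ζ‖ * ‖1 - z * (starRingEnd ℂ) ζ‖ = |1 - ‖ζ‖ ^ 2| := by
  rw [← norm_mul, Acayley, div_mul_cancel₀ _ hzζ, ← Real.norm_eq_abs, ← norm_real]
  push_cast
  rfl

theorem norm_Acayley_div_le (hzζ : 1 - z * (starRingEnd ℂ) ζ ≠ 0) (hζ : ‖ζ‖ ≤ 1) :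
    ‖Acayley z ζ‖ / (1 - ‖ζ‖) ≤ 2 / ‖1 - z * (starRingEnd ℂ) ζ‖ := by
  have sq_le_one : ‖ζ‖ ^ 2 ≤ 1 := pow_le_one₀ (norm_nonneg ζ) hζ
  have factor_le : 1 - ‖ζ‖ ^ 2 ≤ 2 * (1 - ‖ζ‖) := by linarith [sq_nonneg (1 - ‖ζ‖)]
  rw [le_div_iff₀ (norm_pos_iff.2 hzζ), div_mul_eq_mul_div, norm_Acayley_mul_norm hzζ,
    abs_of_nonneg (sub_nonneg.2 sq_le_one)]
  exact div_le_of_le_mul₀ (sub_nonneg.2 hζ) zero_le_two factor_le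

theorem abs_Ks (s : ℕ) (z : ℂ) (hζ : ‖ζ‖ ≤ 1) :
    |Ks s z ζ| = |Real.log ‖weierE (Acayley z ζ) s‖| / (1 - ‖ζ‖) ^ (s + 1) := by
  rw [Ks, abs_div, abs_neg, abs_of_nonneg (pow_nonneg (sub_nonneg.2 hζ) _)]

end Kernel

theorem stmt14_general (s : ℕ) (z ζ : ℂ) (hzζ : 1 - z * (starRingEnd ℂ) ζ ≠ 0) (hζ : ‖ζ‖ ≤ 1)
    (hA : ‖Acayley z ζ‖ ≤ 1 / 2) :
    |Real.log ‖weierE (Acayley z ζ) s‖| ≤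
        2 * ‖Acayley z ζ‖ ^ (s + 1) / (s + 1) ∧
      |Ks s z ζ| ≤ (2 ^ (s + 2) / (s + 1 : ℝ)) *
        (1 / ‖1 - z * (starRingEnd ℂ) ζ‖ ^ (s + 1)) := by
  have log_le := abs_log_norm_weierE_le_of_norm_le_half s hA
  have one_sub_nonneg : 0 ≤ 1 - ‖ζ‖ := sub_nonneg.2 hζ
  have ratio_nonneg : 0 ≤ ‖Acayley z ζ‖ / (1 - ‖ζ‖) := div_nonneg (norm_nonneg _) one_sub_nonneg
  refine ⟨log_le, ?_⟩
  calc |Ks s z ζ|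
      = |Real.log ‖weierE (Acayley z ζ) s‖| / (1 - ‖ζ‖) ^ (s + 1) := abs_Ks s z hζ
    _ ≤ 2 * ‖Acayley z ζ‖ ^ (s + 1) / (s + 1) / (1 - ‖ζ‖) ^ (s + 1) := by gcongr
    _ = 2 / (s + 1) * (‖Acayley z ζ‖ / (1 - ‖ζ‖)) ^ (s + 1) := by
        rw [div_pow]
        ring
    _ ≤ 2 / (s + 1) * (2 / ‖1 - z * (starRingEnd ℂ) ζ‖) ^ (s + 1) :=
        mul_le_mul_of_nonneg_left
          (pow_le_pow_left₀ ratio_nonneg (norm_Acayley_div_le hzζ hζ) _) (by positivity)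
    _ = (2 ^ (s + 2) / (s + 1 : ℝ)) * (1 / ‖1 - z * (starRingEnd ℂ) ζ‖ ^ (s + 1)) := by ring

/-- For `z ∈ 𝔻`, `ζ ∈ closure 𝔻` with `|A(z,ζ)| < 1/2`:
`|log|E(A(z,ζ),s)|| ≤ 2·|A(z,ζ)|^{s+1}/(s+1)` and consequently
`|K_s(z,ζ)| ≤ (2^{s+2}/(s+1))·(1/|1-z·conj ζ|^{s+1})`. -/
theorem stmt14 (s : ℕ) (z ζ : ℂ) (hz : ‖z‖ < 1) (hζ : ‖ζ‖ ≤ 1)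
    (hA : ‖Acayley z ζ‖ < 1 / 2) :
    |Real.log ‖weierE (Acayley z ζ) s‖| ≤
        2 * ‖Acayley z ζ‖ ^ (s + 1) / (s + 1) ∧
      |Ks s z ζ| ≤ (2 ^ (s + 2) / (s + 1 : ℝ)) *
        (1 / ‖1 - z * (starRingEnd ℂ) ζ‖ ^ (s + 1)) :=
  stmt14_general s z ζ (one_sub_mul_conj_ne_zero hz hζ) hζ hA.le
end
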